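/- arXiv:0708.3938 — 4 statements merged into one kernel-verified Lean document; each statement's English description precedes it below -/
import Mathlib

section
/- Let a¹ and a² be two fixed distinct directions in ℝⁿ and let X ⊂ ℝⁿ. If the lengths of all irreducible paths in X (with respect to a¹ and a²) are uniformly bounded by some positive integer, then every function f ∈ B(X) has an extremal element in R_b(X); that is, R_b(X) is proximinal in B(X). -/
open Matrix Set Filter Topology

/-- `p 0, p 1, ..., p (m-1)` is a (finite) path whose first difference is
perpendicular to `a1`, with differences alternately perpendicular to `a1` and `a2`,
and all differences nonzero. -/
def IsPathFrom {n : ℕ} (a1 a2 : Fin n → ℝ) (m : ℕ) (p : ℕ → Fin n → ℝ) : Prop :=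
  ∀ i, i + 1 < m →
    p (i + 1) - p i ≠ 0 ∧
    (i % 2 = 0 → a1 ⬝ᵥ (p (i + 1) - p i) = 0) ∧
    (i % 2 = 1 → a2 ⬝ᵥ (p (i + 1) - p i) = 0)

/-- A finite path with respect to the directions `a1` and `a2` (the alternation may
start with either direction). -/
def IsPath {n : ℕ} (a1 a2 : Fin n → ℝ) (m : ℕ) (p : ℕ → Fin n → ℝ) : Prop :=
  IsPathFrom a1 a2 m p ∨ IsPathFrom a2 a1 m p

/-- A finite path of length `m` (i.e. with `m` points) all of whose points lie in `X`. -/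
def IsPathIn {n : ℕ} (a1 a2 : Fin n → ℝ) (X : Set (Fin n → ℝ)) (m : ℕ)
    (p : ℕ → Fin n → ℝ) : Prop :=
  1 ≤ m ∧ IsPath a1 a2 m p ∧ ∀ i < m, p i ∈ X

/-- An irreducible path in `X`: no strictly shorter path in `X` joins its endpoints. -/
def IsIrreduciblePathIn {n : ℕ} (a1 a2 : Fin n → ℝ) (X : Set (Fin n → ℝ)) (m : ℕ)
    (p : ℕ → Fin n → ℝ) : Prop :=
  IsPathIn a1 a2 X m p ∧
  ¬ ∃ l q, l < m ∧ IsPathIn a1 a2 X l q ∧ q 0 = p 0 ∧ q (l - 1) = p (m - 1)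

/-- An infinite path whose first difference is perpendicular to `a1`. -/
def IsInfPathFrom {n : ℕ} (a1 a2 : Fin n → ℝ) (p : ℕ → Fin n → ℝ) : Prop :=
  ∀ i,
    p (i + 1) - p i ≠ 0 ∧
    (i % 2 = 0 → a1 ⬝ᵥ (p (i + 1) - p i) = 0) ∧
    (i % 2 = 1 → a2 ⬝ᵥ (p (i + 1) - p i) = 0)

/-- An infinite path with respect to the directions `a1` and `a2`. -/
def IsInfPath {n : ℕ} (a1 a2 : Fin n → ℝ) (p : ℕ → Fin n → ℝ) : Prop :=
  IsInfPathFrom a1 a2 p ∨ IsInfPathFrom a2 a1 p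

/-- `f` is bounded on `X`. -/
def BddOn {n : ℕ} (f : (Fin n → ℝ) → ℝ) (X : Set (Fin n → ℝ)) : Prop :=
  ∃ M, ∀ x ∈ X, |f x| ≤ M

/-- `R_a(X)`: sums of two ridge functions with directions `a1, a2` that are bounded on `X`
(the individual summands need not be bounded). -/
def RaSet {n : ℕ} (a1 a2 : Fin n → ℝ) (X : Set (Fin n → ℝ)) : Set ((Fin n → ℝ) → ℝ) :=
  {f | (∃ g1 g2 : ℝ → ℝ, ∀ x ∈ X, f x = g1 (a1 ⬝ᵥ x) + g2 (a2 ⬝ᵥ x)) ∧ BddOn f X}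

/-- `R_b(X)`: sums of two ridge functions with directions `a1, a2` whose summands are
bounded on `X`. -/
def RbSet {n : ℕ} (a1 a2 : Fin n → ℝ) (X : Set (Fin n → ℝ)) : Set ((Fin n → ℝ) → ℝ) :=
  {f | ∃ g1 g2 : ℝ → ℝ, (∀ x ∈ X, f x = g1 (a1 ⬝ᵥ x) + g2 (a2 ⬝ᵥ x)) ∧
    BddOn (fun x => g1 (a1 ⬝ᵥ x)) X ∧ BddOn (fun x => g2 (a2 ⬝ᵥ x)) X}

/-- `R_c(X)`: sums of two ridge functions with directions `a1, a2` whose summands are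
continuous on `X`. -/
def RcSet {n : ℕ} (a1 a2 : Fin n → ℝ) (X : Set (Fin n → ℝ)) : Set ((Fin n → ℝ) → ℝ) :=
  {f | ∃ g1 g2 : ℝ → ℝ, (∀ x ∈ X, f x = g1 (a1 ⬝ᵥ x) + g2 (a2 ⬝ᵥ x)) ∧
    ContinuousOn (fun x => g1 (a1 ⬝ᵥ x)) X ∧ ContinuousOn (fun x => g2 (a2 ⬝ᵥ x)) X}

/-- The uniform (sup) distance of `f` and `g` over `X`. -/
noncomputable def supDist {n : ℕ} (X : Set (Fin n → ℝ)) (f g : (Fin n → ℝ) → ℝ) : ℝ :=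
  sSup {r | ∃ x ∈ X, r = |f x - g x|}

/-- `f` has an extremal element (best approximation in the sup norm over `X`) in `S`. -/
def HasExtremalIn {n : ℕ} (X : Set (Fin n → ℝ)) (f : (Fin n → ℝ) → ℝ)
    (S : Set ((Fin n → ℝ) → ℝ)) : Prop :=
  ∃ g0 ∈ S, supDist X f g0 = sInf ((supDist X f) '' S)

/-- The orbit of `t`: all points of `X` joined to `t` by a common path lying in `X`. -/
def Orbit {n : ℕ} (a1 a2 : Fin n → ℝ) (X : Set (Fin n → ℝ)) (t : Fin n → ℝ) :
    Set (Fin n → ℝ) :=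
  {y | ∃ m p, IsPathIn a1 a2 X m p ∧ (∃ i < m, p i = t) ∧ (∃ j < m, p j = y)}

/-- The variation of `f` on a set `Y`. -/
noncomputable def varOn {n : ℕ} (f : (Fin n → ℝ) → ℝ) (Y : Set (Fin n → ℝ)) : ℝ :=
  sSup {r | ∃ x ∈ Y, ∃ y ∈ Y, r = |f x - f y|}

/-!
Join two points of `X` when they share a value of `a1 ⬝ᵥ ·` or of `a2 ⬝ᵥ ·`. Geodesics of this graph
are irreducible paths, so the distance between points of one component is bounded. If a sum
`u + v` of ridge functions is bounded by `C`, then `u` varies by at most `2 * C` along each edge;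
subtracting from `u`, and adding to `v`, the value of `u` at a base point of each component
therefore bounds both summands in terms of `C` alone. Only sums bounded by twice the bound of `f`
can improve on the approximation of `f` by `0`, so it suffices to minimize over sums of summands
with one common bound. These form a compact set for pointwise convergence, on which the sup
distance to `f` is lower semicontinuous.
-/

lemma dist_getVert_add_of_length_eq_dist {V : Type*} {G : SimpleGraph V} {x y : V}
    {w : G.Walk x y} (hw : w.length = G.dist x y) {i k : ℕ} (hik : i + k ≤ w.length) :
    G.dist (w.getVert i) (w.getVert (i + k)) = k := by
  have hsub : ((w.drop i).take k).IsSubwalk w :=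
    ((w.drop i).isSubwalk_take k).trans (w.isSubwalk_drop i)
  have hlen : ((w.drop i).take k).length = k := by
    rw [SimpleGraph.Walk.take_length, SimpleGraph.Walk.drop_length]
    omega
  rw [← SimpleGraph.Walk.drop_getVert, ← SimpleGraph.length_eq_dist_of_subwalk hw hsub, hlen]

lemma alternating_of_not_consecutive {P Q : ℕ → Prop} {m : ℕ} (hPQ : ∀ i < m, P i ∨ Q i)
    (hP : ∀ i, i + 1 < m → P i → ¬ P (i + 1)) (hQ : ∀ i, i + 1 < m → Q i → ¬ Q (i + 1))
    (h0 : P 0) : ∀ i < m, (i % 2 = 0 → P i) ∧ (i % 2 = 1 → Q i) := by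
  intro i
  induction i with
  | zero => exact fun _ => ⟨fun _ => h0, by simp⟩
  | succ i ih =>
    intro hi
    obtain ⟨heven, hodd⟩ := ih (by omega)
    exact ⟨fun h => (hPQ _ hi).resolve_right (hQ i hi (hodd (by omega))),
      fun h => (hPQ _ hi).resolve_left (hP i hi (heven (by omega)))⟩

/-- The graph joining distinct points that lie on a common level set of `φ` or of `ψ`. For
`φ = (a1 ⬝ᵥ ·)` and `ψ = (a2 ⬝ᵥ ·)` its edges are the admissible steps of a path. -/
def levelGraph {α β γ : Type*} (φ : α → β) (ψ : α → γ) : SimpleGraph α where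
  Adj x y := x ≠ y ∧ (φ x = φ y ∨ ψ x = ψ y)
  symm := ⟨fun _ _ h => ⟨h.1.symm, h.2.imp Eq.symm Eq.symm⟩⟩
  loopless := ⟨fun _ h => h.1 rfl⟩

section LevelGraph

variable {α β γ : Type*} {φ : α → β} {ψ : α → γ} {x y : α}

lemma eq_or_levelGraph_adj (h : φ x = φ y ∨ ψ x = ψ y) : x = y ∨ (levelGraph φ ψ).Adj x y :=
  (eq_or_ne x y).imp_right fun hxy => ⟨hxy, h⟩

lemma levelGraph_dist_le_one (h : φ x = φ y ∨ ψ x = ψ y) : (levelGraph φ ψ).dist x y ≤ 1 := by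
  rcases eq_or_levelGraph_adj h with rfl | hadj
  · simp
  · exact (SimpleGraph.dist_eq_one_iff_adj.2 hadj).le

lemma levelGraph_reachable (h : φ x = φ y ∨ ψ x = ψ y) : (levelGraph φ ψ).Reachable x y := by
  rcases eq_or_levelGraph_adj h with rfl | hadj
  · rfl
  · exact hadj.reachable

lemma alternating_of_length_eq_dist {w : (levelGraph φ ψ).Walk x y}
    (hw : w.length = (levelGraph φ ψ).dist x y) :
    (∀ i < w.length, (i % 2 = 0 → φ (w.getVert i) = φ (w.getVert (i + 1))) ∧
      (i % 2 = 1 → ψ (w.getVert i) = ψ (w.getVert (i + 1)))) ∨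
    (∀ i < w.length, (i % 2 = 0 → ψ (w.getVert i) = ψ (w.getVert (i + 1))) ∧
      (i % 2 = 1 → φ (w.getVert i) = φ (w.getVert (i + 1)))) := by
  have step : ∀ i < w.length, φ (w.getVert i) = φ (w.getVert (i + 1)) ∨
      ψ (w.getVert i) = ψ (w.getVert (i + 1)) := fun i hi => (w.adj_getVert_succ hi).2
  have no_shortcut : ∀ i, i + 1 < w.length → ¬ (φ (w.getVert i) = φ (w.getVert (i + 2)) ∨
      ψ (w.getVert i) = ψ (w.getVert (i + 2))) := by
    intro i hi h
    have htwo := dist_getVert_add_of_length_eq_dist hw (show i + 2 ≤ w.length by omega)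
    have hone := levelGraph_dist_le_one h
    omega
  have hφ : ∀ i, i + 1 < w.length → φ (w.getVert i) = φ (w.getVert (i + 1)) →
      ¬ φ (w.getVert (i + 1)) = φ (w.getVert (i + 2)) :=
    fun i hi h h' => no_shortcut i hi (.inl (h.trans h'))
  have hψ : ∀ i, i + 1 < w.length → ψ (w.getVert i) = ψ (w.getVert (i + 1)) →
      ¬ ψ (w.getVert (i + 1)) = ψ (w.getVert (i + 2)) :=
    fun i hi h h' => no_shortcut i hi (.inr (h.trans h'))
  rcases Nat.eq_zero_or_pos w.length with hzero | hpos
  · exact .inl fun i hi => by omega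
  · exact (step 0 hpos).imp (alternating_of_not_consecutive step hφ hψ)
      (alternating_of_not_consecutive (fun i hi => (step i hi).symm) hψ hφ)

section Oscillation

variable {E : Type*} [SeminormedAddCommGroup E] {u v : α → E} {C : ℝ}

lemma norm_sub_le_of_levelGraph_adj (hu : u.FactorsThrough φ) (hv : v.FactorsThrough ψ)
    (hC : ∀ x, ‖u x + v x‖ ≤ C) (h : (levelGraph φ ψ).Adj x y) : ‖u x - u y‖ ≤ 2 * C := by
  rcases h.2 with hφ | hψ
  · have hC0 : 0 ≤ C := (norm_nonneg _).trans (hC x)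
    simpa [hu hφ] using hC0
  · calc ‖u x - u y‖ = ‖(u x + v x) - (u y + v y)‖ := by rw [hv hψ, add_sub_add_right_eq_sub]
      _ ≤ ‖u x + v x‖ + ‖u y + v y‖ := norm_sub_le _ _
      _ ≤ 2 * C := by linarith [hC x, hC y]

lemma norm_sub_le_of_levelGraph_walk (hu : u.FactorsThrough φ) (hv : v.FactorsThrough ψ)
    (hC : ∀ x, ‖u x + v x‖ ≤ C) (w : (levelGraph φ ψ).Walk x y) :
    ‖u x - u y‖ ≤ 2 * C * w.length := by
  induction w with
  | nil => simp
  | @cons x z y h w ih =>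
    calc ‖u x - u y‖ ≤ ‖u x - u z‖ + ‖u z - u y‖ := norm_sub_le_norm_sub_add_norm_sub _ _ _
      _ ≤ 2 * C + 2 * C * w.length := add_le_add (norm_sub_le_of_levelGraph_adj hu hv hC h) ih
      _ = 2 * C * (w.cons h).length := by rw [SimpleGraph.Walk.length_cons]; push_cast; ring

end Oscillation

end LevelGraph

section BoundedSums

open scoped Pointwise

/-- The functions `α → E` that factor through `φ` and are bounded in norm by `D`. -/
def factoringBall {α β : Type*} (φ : α → β) (E : Type*) [Norm E] (D : ℝ) : Set (α → E) :=
  {u | u.FactorsThrough φ ∧ ∀ x, ‖u x‖ ≤ D}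

/-- The sums of a bounded function factoring through `φ` and a bounded function factoring
through `ψ`; the analogue of `RbSet` for arbitrary maps in place of `a1 ⬝ᵥ ·` and `a2 ⬝ᵥ ·`. -/
def boundedSums {α β γ : Type*} (φ : α → β) (ψ : α → γ) (E : Type*) [Norm E] [Add E] :
    Set (α → E) :=
  ⋃ D : ℝ, factoringBall φ E D + factoringBall ψ E D

variable {α β γ E : Type*} {φ : α → β} {ψ : α → γ} {D : ℝ}

lemma norm_le_of_mem_factoringBall_add [SeminormedAddGroup E] {g : α → E}
    (hg : g ∈ factoringBall φ E D + factoringBall ψ E D) (x : α) : ‖g x‖ ≤ D + D := by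
  obtain ⟨u, hu, v, hv, rfl⟩ := hg
  exact norm_add_le_of_le (hu.2 x) (hv.2 x)

lemma zero_mem_factoringBall [SeminormedAddGroup E] (hD : 0 ≤ D) :
    (0 : α → E) ∈ factoringBall φ E D :=
  ⟨fun _ _ _ => rfl, fun _ => by simpa using hD⟩

lemma isCompact_factoringBall [NormedAddCommGroup E] [ProperSpace E] :
    IsCompact (factoringBall φ E D) := by
  have hcompact : IsCompact (Set.univ.pi fun _ : α => Metric.closedBall (0 : E) D) :=
    isCompact_univ_pi fun _ => isCompact_closedBall 0 D
  refine hcompact.of_isClosed_subset ?_ fun u hu x _ => mem_closedBall_zero_iff.2 (hu.2 x)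
  simp only [factoringBall, Function.FactorsThrough, ofPred_and, ofPred_forall]
  exact .inter
    (isClosed_iInter fun x => isClosed_iInter fun y => isClosed_iInter fun _ =>
      isClosed_eq (continuous_apply x) (continuous_apply y))
    (isClosed_iInter fun x => isClosed_le (continuous_apply x).norm continuous_const)

lemma bddAbove_range_norm_sub [SeminormedAddGroup E] {f g : α → E}
    (hf : Bornology.IsBounded (range f)) (hg : ∀ x, ‖g x‖ ≤ D) :
    BddAbove (range fun x => ‖f x - g x‖) := by
  obtain ⟨M, hM⟩ := hf.exists_norm_le
  exact ⟨M + D, forall_mem_range.2 fun x => norm_sub_le_of_le (hM _ (mem_range_self x)) (hg x)⟩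

lemma exists_isMinOn_factoringBall_add [NormedAddCommGroup E] [ProperSpace E] (hD : 0 ≤ D)
    {f : α → E} (hf : Bornology.IsBounded (range f)) :
    ∃ g ∈ factoringBall φ E D + factoringBall ψ E D,
      IsMinOn (fun g => ⨆ x, ‖f x - g x‖) (factoringBall φ E D + factoringBall ψ E D) g :=
  LowerSemicontinuousOn.exists_isMinOn
    ⟨0 + 0, add_mem_add (zero_mem_factoringBall hD) (zero_mem_factoringBall hD)⟩
    (isCompact_factoringBall.add isCompact_factoringBall)
    (lowerSemicontinuousOn_ciSup
      (fun _ hg => bddAbove_range_norm_sub hf (norm_le_of_mem_factoringBall_add hg))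
      fun x => Continuous.lowerSemicontinuous (by fun_prop) |>.lowerSemicontinuousOn _)

lemma mem_factoringBall_add_of_norm_add_le [SeminormedAddCommGroup E] {N : ℕ} {u v : α → E} {C : ℝ}
    (hN : ∀ x y, (levelGraph φ ψ).Reachable x y → (levelGraph φ ψ).dist x y ≤ N)
    (hu : u.FactorsThrough φ) (hv : v.FactorsThrough ψ) (hC : ∀ x, ‖u x + v x‖ ≤ C) :
    u + v ∈ factoringBall φ E (2 * C * N + C) + factoringBall ψ E (2 * C * N + C) := by
  let base (x : α) : α := ((levelGraph φ ψ).connectedComponentMk x).out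
  have hreach (x : α) : (levelGraph φ ψ).Reachable x (base x) :=
    SimpleGraph.ConnectedComponent.exact (Quot.out_eq _).symm
  have hbase {x y : α} (h : φ x = φ y ∨ ψ x = ψ y) : base x = base y :=
    congrArg Quot.out (SimpleGraph.ConnectedComponent.sound (levelGraph_reachable h))
  have hosc (x : α) : ‖u x - u (base x)‖ ≤ 2 * C * N := by
    obtain ⟨w, hw⟩ := (hreach x).exists_walk_length_eq_dist
    have hC0 : 0 ≤ C := (norm_nonneg _).trans (hC x)
    calc ‖u x - u (base x)‖ ≤ 2 * C * w.length := norm_sub_le_of_levelGraph_walk hu hv hC w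
      _ ≤ 2 * C * N := by gcongr; exact hw.trans_le (hN _ _ (hreach x))
  refine ⟨fun x => u x - u (base x), ⟨fun x y h => ?_, fun x => ?_⟩,
    fun x => v x + u (base x), ⟨fun x y h => ?_, fun x => ?_⟩, ?_⟩
  · simp only [hu h, hbase (.inl h)]
  · exact (hosc x).trans (le_add_of_nonneg_right ((norm_nonneg _).trans (hC x)))
  · simp only [hv h, hbase (.inr h)]
  · calc ‖v x + u (base x)‖ = ‖(u x + v x) - (u x - u (base x))‖ := by congr 1; abel
      _ ≤ C + 2 * C * N := norm_sub_le_of_le (hC x) (hosc x)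
      _ = 2 * C * N + C := add_comm _ _
  · ext x
    simp only [Pi.add_apply]
    abel

theorem proximinality_of_Rb_of_bounded_irreducible_paths_general
    [NormedAddCommGroup E] [ProperSpace E] {N : ℕ}
    (hN : ∀ x y, (levelGraph φ ψ).Reachable x y → (levelGraph φ ψ).dist x y ≤ N)
    {f : α → E} (hf : Bornology.IsBounded (range f)) :
    ∃ g ∈ boundedSums φ ψ E,
      IsMinOn (fun g => ⨆ x, ‖f x - g x‖) (boundedSums φ ψ E) g := by
  obtain ⟨M, hM0, hM⟩ := hf.exists_pos_norm_le
  replace hM (x : α) : ‖f x‖ ≤ M := hM _ (mem_range_self x)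
  have hD : 0 ≤ 2 * (M + M) * N + (M + M) := by positivity
  obtain ⟨g, hg, hmin⟩ := exists_isMinOn_factoringBall_add (φ := φ) (ψ := ψ) hD hf
  refine ⟨g, mem_iUnion_of_mem _ hg, fun h hh => ?_⟩
  obtain ⟨D, hhD⟩ := mem_iUnion.1 hh
  by_cases hle : ⨆ x, ‖f x - h x‖ ≤ M
  · have hhM (x : α) : ‖h x‖ ≤ M + M := by
      have hdist : ‖f x - h x‖ ≤ M :=
        (le_ciSup (bddAbove_range_norm_sub hf (norm_le_of_mem_factoringBall_add hhD)) x).trans hle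
      simpa using norm_sub_le_of_le (hM x) hdist
    obtain ⟨u, hu, v, hv, rfl⟩ := hhD
    exact hmin (mem_factoringBall_add_of_norm_add_le hN hu.1 hv.1 hhM)
  · have hzero : ⨆ x, ‖f x - g x‖ ≤ ⨆ x, ‖f x - (0 + 0 : α → E) x‖ :=
      hmin (add_mem_add (zero_mem_factoringBall hD) (zero_mem_factoringBall hD))
    exact (hzero.trans (Real.iSup_le (by simpa using hM) hM0.le)).trans (not_le.1 hle).le

end BoundedSums

/-- The graph on `X` whose edges are the admissible steps of paths with respect to `a1`, `a2`. -/
abbrev ridgeGraph {n : ℕ} (a1 a2 : Fin n → ℝ) (X : Set (Fin n → ℝ)) : SimpleGraph X :=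
  levelGraph (fun x : X => a1 ⬝ᵥ x.1) (fun x : X => a2 ⬝ᵥ x.1)

/-- The space `R_b(X)`, with its elements regarded as functions on the subtype `X`. -/
abbrev boundedRidgeSums {n : ℕ} (a1 a2 : Fin n → ℝ) (X : Set (Fin n → ℝ)) : Set (X → ℝ) :=
  boundedSums (fun x : X => a1 ⬝ᵥ x.1) (fun x : X => a2 ⬝ᵥ x.1) ℝ

section Paths

variable {n : ℕ} {a1 a2 : Fin n → ℝ} {X : Set (Fin n → ℝ)} {m : ℕ} {p : ℕ → Fin n → ℝ}

lemma isPathFrom_iff_dotProduct_eq : IsPathFrom a1 a2 m p ↔ ∀ i, i + 1 < m → p (i + 1) ≠ p i ∧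
    (i % 2 = 0 → a1 ⬝ᵥ p (i + 1) = a1 ⬝ᵥ p i) ∧ (i % 2 = 1 → a2 ⬝ᵥ p (i + 1) = a2 ⬝ᵥ p i) := by
  simp only [IsPathFrom, dotProduct_sub, sub_ne_zero, sub_eq_zero]

lemma IsPathFrom.dotProduct_succ_eq (hp : IsPathFrom a1 a2 m p) {i : ℕ} (hi : i + 1 < m) :
    p (i + 1) ≠ p i ∧ (a1 ⬝ᵥ p (i + 1) = a1 ⬝ᵥ p i ∨ a2 ⬝ᵥ p (i + 1) = a2 ⬝ᵥ p i) := by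
  obtain ⟨hne, heven, hodd⟩ := isPathFrom_iff_dotProduct_eq.1 hp i hi
  exact ⟨hne, (Nat.mod_two_eq_zero_or_one i).imp heven hodd⟩

lemma IsPath.dotProduct_succ_eq (hp : IsPath a1 a2 m p) {i : ℕ} (hi : i + 1 < m) :
    p (i + 1) ≠ p i ∧ (a1 ⬝ᵥ p (i + 1) = a1 ⬝ᵥ p i ∨ a2 ⬝ᵥ p (i + 1) = a2 ⬝ᵥ p i) :=
  hp.elim (·.dotProduct_succ_eq hi) fun hp => (hp.dotProduct_succ_eq hi).imp_right Or.symm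

lemma IsPathIn.exists_walk (hp : IsPathIn a1 a2 X m p) (i : ℕ) (hi : i < m) :
    ∃ w : (ridgeGraph a1 a2 X).Walk ⟨p 0, hp.2.2 0 hp.1⟩ ⟨p i, hp.2.2 i hi⟩, w.length = i := by
  induction i with
  | zero => exact ⟨.nil, rfl⟩
  | succ i ih =>
    obtain ⟨w, hw⟩ := ih (by omega)
    obtain ⟨hne, hdot⟩ := hp.2.1.dotProduct_succ_eq hi
    have hadj : (ridgeGraph a1 a2 X).Adj ⟨p (i + 1), hp.2.2 _ hi⟩ ⟨p i, hp.2.2 i (by omega)⟩ :=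
      ⟨fun h => hne (congrArg Subtype.val h), hdot⟩
    exact ⟨w.concat hadj.symm, by rw [SimpleGraph.Walk.length_concat, hw]⟩

lemma IsPathIn.dist_lt (hp : IsPathIn a1 a2 X m p) {x y : X} (hx : p 0 = x)
    (hy : p (m - 1) = y) : (ridgeGraph a1 a2 X).dist x y < m := by
  have hm : m - 1 < m := Nat.sub_one_lt_of_lt hp.1
  obtain ⟨w, hw⟩ := hp.exists_walk (m - 1) hm
  obtain rfl : (⟨p 0, hp.2.2 0 hp.1⟩ : X) = x := Subtype.ext hx
  obtain rfl : (⟨p (m - 1), hp.2.2 _ hm⟩ : X) = y := Subtype.ext hy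
  exact (SimpleGraph.dist_le w).trans_lt (hw.trans_lt hm)

lemma isPath_getVert {x y : X} {w : (ridgeGraph a1 a2 X).Walk x y}
    (hw : w.length = (ridgeGraph a1 a2 X).dist x y) :
    IsPath a1 a2 (w.length + 1) fun i => w.getVert i := by
  have hne (i : ℕ) (hi : i < w.length) : (w.getVert (i + 1) : Fin n → ℝ) ≠ w.getVert i :=
    fun h => (w.adj_getVert_succ hi).1 (Subtype.ext h.symm)
  simp only [IsPath, isPathFrom_iff_dotProduct_eq, Nat.add_lt_add_iff_right]
  refine (alternating_of_length_eq_dist hw).imp ?_ ?_ <;>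
    exact fun h i hi => ⟨hne i hi, fun heven => ((h i hi).1 heven).symm,
      fun hodd => ((h i hi).2 hodd).symm⟩

lemma isIrreduciblePathIn_getVert {x y : X} {w : (ridgeGraph a1 a2 X).Walk x y}
    (hw : w.length = (ridgeGraph a1 a2 X).dist x y) :
    IsIrreduciblePathIn a1 a2 X (w.length + 1) fun i => w.getVert i := by
  refine ⟨⟨by omega, isPath_getVert hw, fun i _ => (w.getVert i).2⟩, ?_⟩
  rintro ⟨l, q, hl, hq, hq0, hq1⟩
  have hlt : (ridgeGraph a1 a2 X).dist x y < l :=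
    hq.dist_lt (by simpa using hq0) (by simpa using hq1)
  omega

lemma ridgeGraph_dist_lt {N : ℕ} (hbound : ∀ m p, IsIrreduciblePathIn a1 a2 X m p → m ≤ N)
    {x y : X} (hxy : (ridgeGraph a1 a2 X).Reachable x y) : (ridgeGraph a1 a2 X).dist x y < N := by
  obtain ⟨w, hw⟩ := hxy.exists_walk_length_eq_dist
  exact hw ▸ hbound _ _ (isIrreduciblePathIn_getVert hw)

end Paths

section Extremal

variable {n : ℕ} {a1 a2 : Fin n → ℝ} {X : Set (Fin n → ℝ)} {f : (Fin n → ℝ) → ℝ}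

lemma supDist_eq_iSup (g : (Fin n → ℝ) → ℝ) : supDist X f g = ⨆ x : X, ‖f x - g x‖ := by
  unfold supDist iSup
  congr 1
  ext r
  simp [eq_comm]

lemma isBounded_range_domRestrict (hf : BddOn f X) :
    Bornology.IsBounded (range (X.domRestrict f)) := by
  obtain ⟨M, hM⟩ := hf
  exact isBounded_iff_forall_norm_le.2 ⟨M, forall_mem_range.2 fun x => hM x x.2⟩

lemma domRestrict_mem_boundedRidgeSums {g : (Fin n → ℝ) → ℝ} (hg : g ∈ RbSet a1 a2 X) :
    X.domRestrict g ∈ boundedRidgeSums a1 a2 X := by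
  obtain ⟨g₁, g₂, hsum, ⟨M₁, hM₁⟩, M₂, hM₂⟩ := hg
  refine mem_iUnion.2 ⟨max M₁ M₂,
    fun x => g₁ (a1 ⬝ᵥ x.1), ⟨fun x y h => congrArg g₁ h, fun x => le_max_of_le_left (hM₁ x x.2)⟩,
    fun x => g₂ (a2 ⬝ᵥ x.1), ⟨fun x y h => congrArg g₂ h, fun x => le_max_of_le_right (hM₂ x x.2)⟩,
    funext fun x => (hsum x x.2).symm⟩

lemma exists_mem_RbSet_domRestrict_eq {g : X → ℝ}
    (hg : g ∈ boundedRidgeSums a1 a2 X) :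
    ∃ g' ∈ RbSet a1 a2 X, X.domRestrict g' = g := by
  obtain ⟨D, u, ⟨hu, huD⟩, v, ⟨hv, hvD⟩, rfl⟩ := mem_iUnion.1 hg
  obtain ⟨g₁, rfl⟩ := (Function.factorsThrough_iff u).1 hu
  obtain ⟨g₂, rfl⟩ := (Function.factorsThrough_iff v).1 hv
  exact ⟨fun x => g₁ (a1 ⬝ᵥ x) + g₂ (a2 ⬝ᵥ x), ⟨g₁, g₂, fun _ _ => rfl,
    ⟨D, fun x hx => huD ⟨x, hx⟩⟩, ⟨D, fun x hx => hvD ⟨x, hx⟩⟩⟩, rfl⟩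

lemma hasExtremalIn_RbSet_of_exists_isMinOn
    (h : ∃ g ∈ boundedRidgeSums a1 a2 X,
      IsMinOn (fun g => ⨆ x, ‖X.domRestrict f x - g x‖) (boundedRidgeSums a1 a2 X) g) :
    HasExtremalIn X f (RbSet a1 a2 X) := by
  obtain ⟨g, hg, hmin⟩ := h
  obtain ⟨g₀, hg₀, rfl⟩ := exists_mem_RbSet_domRestrict_eq hg
  have hleast : IsLeast (supDist X f '' RbSet a1 a2 X) (supDist X f g₀) := by
    refine ⟨mem_image_of_mem _ hg₀, forall_mem_image.2 fun g' hg' => ?_⟩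
    rw [supDist_eq_iSup, supDist_eq_iSup]
    exact hmin (domRestrict_mem_boundedRidgeSums hg')
  exact ⟨g₀, hg₀, hleast.csInf_eq.symm⟩

end Extremal

/-- Theorem 1.1: if the lengths of all irreducible paths in `X`
with respect to the distinct nonzero directions `a1, a2` are uniformly bounded by a
positive integer, then every bounded function on `X` has an extremal element in
`R_b(X)`; i.e. `R_b(X)` is proximinal in `B(X)`. -/
theorem proximinality_of_Rb_of_bounded_irreducible_paths
    {n : ℕ} (a1 a2 : Fin n → ℝ) (ha1 : a1 ≠ 0) (ha2 : a2 ≠ 0) (hne : a1 ≠ a2)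
    (X : Set (Fin n → ℝ)) (N : ℕ) (hN : 0 < N)
    (hbound : ∀ m p, IsIrreduciblePathIn a1 a2 X m p → m ≤ N)
    (f : (Fin n → ℝ) → ℝ) (hf : BddOn f X) :
    HasExtremalIn X f (RbSet a1 a2 X) :=
  hasExtremalIn_RbSet_of_exists_isMinOn <|
    proximinality_of_Rb_of_bounded_irreducible_paths_general
      (fun _ _ hxy => (ridgeGraph_dist_lt hbound hxy).le) (isBounded_range_domRestrict hf)
end

section
/- Let a¹ = (1, −1), a² = (1, 1) in ℝ², and let X = {x⁰, x¹, x², ...} ⊂ ℝ² where x⁰ = (2, 2/3), x¹ = (2/3, −2/3), x² = (0, 0), and x^{3+k} = (Σ_{j=0}^{k} 2^{−j}, Σ_{j=0}^{k} (−1)^j 2^{−j}) for k = 0, 1, 2, .... Then the ordered set (x⁰, x¹, x², ...) is a path of infinite length with respect to a¹ and a², and xⁿ → x⁰ as n → ∞; in particular, X is compact. -/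
open Matrix Set Filter Topology

/-- The sequence of points `x⁰, x¹, x², …` of the example:
`x⁰ = (2, 2/3)`, `x¹ = (2/3, −2/3)`, `x² = (0,0)` and
`x^{3+k} = (∑_{j=0}^k 2^{−j}, ∑_{j=0}^k (−1)^j 2^{−j})`. -/
noncomputable def xseq : ℕ → (Fin 2 → ℝ)
  | 0 => ![2, 2 / 3]
  | 1 => ![2 / 3, -(2 / 3)]
  | 2 => ![0, 0]
  | (k + 3) => ![∑ j ∈ Finset.range (k + 1), (1 / 2 : ℝ) ^ j,
                 ∑ j ∈ Finset.range (k + 1), (-(1 / 2) : ℝ) ^ j]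

/-!
From `x²`, the empty sum, on, the points are the partial sums of the vectors `(2⁻ʲ, (-2)⁻ʲ)`, whose
direction is `(1, 1)` for even `j` and `(1, -1)` for odd `j`; so they form a path with respect to
`(1, -1)` and `(1, 1)`. Summing the two geometric series, this path converges to `(2, 2/3)`, which
is `x⁰`. The point `x¹` joins this limit back to the origin: it is the intersection of the line
through `x⁰` of direction `(1, 1)` with the line through `0` of direction `(1, -1)`.
-/

theorem isCompact_range_of_tendsto_apply {X : Type*} [TopologicalSpace X] {u : ℕ → X} {n : ℕ}
    (hu : Tendsto u atTop (𝓝 (u n))) : IsCompact (range u) := by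
  simpa only [insert_eq_of_mem (mem_range_self n)] using hu.isCompact_insert_range

section Paths

variable {n : ℕ} {a1 a2 : Fin n → ℝ}

theorem isInfPathFrom_iff_tail {p : ℕ → Fin n → ℝ} :
    IsInfPathFrom a1 a2 p ↔
      p 1 - p 0 ≠ 0 ∧ a1 ⬝ᵥ (p 1 - p 0) = 0 ∧ IsInfPathFrom a2 a1 (fun i ↦ p (i + 1)) := by
  constructor
  · intro hp
    refine ⟨(hp 0).1, (hp 0).2.1 rfl, fun i ↦ ?_⟩
    obtain ⟨hne, heven, hodd⟩ := hp (i + 1)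
    exact ⟨hne, fun hi ↦ hodd (by lia), fun hi ↦ heven (by lia)⟩
  · rintro ⟨hne, hperp, htail⟩ (_ | i)
    · exact ⟨hne, fun _ ↦ hperp, fun h ↦ by lia⟩
    · obtain ⟨hne, heven, hodd⟩ := htail i
      exact ⟨hne, fun hi ↦ hodd (by lia), fun hi ↦ heven (by lia)⟩

theorem isInfPathFrom_sum_range_iff {d : ℕ → Fin n → ℝ} :
    IsInfPathFrom a1 a2 (fun k ↦ ∑ j ∈ Finset.range k, d j) ↔
      ∀ k, d k ≠ 0 ∧ (Even k → a1 ⬝ᵥ d k = 0) ∧ (Odd k → a2 ⬝ᵥ d k = 0) := by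
  simp only [IsInfPathFrom, Finset.sum_range_succ, add_sub_cancel_left, Nat.even_iff, Nat.odd_iff]

end Paths

section ZigzagStep

/-- The `k`-th step of the geometric zigzag of ratio `r`: a vector of sup norm `|r| ^ k` along one
of the two diagonals of the plane, the diagonal changing with the parity of `k`. -/
def zigzagStep (r : ℝ) (k : ℕ) : Fin 2 → ℝ :=
  ![r ^ k, (-r) ^ k]

variable {r : ℝ} {k : ℕ}

theorem zigzagStep_ne_zero (hr : r ≠ 0) : zigzagStep r k ≠ 0 :=
  fun h ↦ pow_ne_zero k hr (congrFun h 0)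

theorem dotProduct_zigzagStep_of_even (hk : Even k) : ![1, -1] ⬝ᵥ zigzagStep r k = 0 := by
  simp [zigzagStep, hk.neg_pow]

theorem dotProduct_zigzagStep_of_odd (hk : Odd k) : ![1, 1] ⬝ᵥ zigzagStep r k = 0 := by
  simp [zigzagStep, hk.neg_pow]

theorem isInfPathFrom_sum_zigzagStep (hr : r ≠ 0) :
    IsInfPathFrom ![1, -1] ![1, 1] (fun k ↦ ∑ j ∈ Finset.range k, zigzagStep r j) :=
  isInfPathFrom_sum_range_iff.2 fun _ ↦
    ⟨zigzagStep_ne_zero hr, dotProduct_zigzagStep_of_even, dotProduct_zigzagStep_of_odd⟩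

theorem hasSum_zigzagStep (hr : |r| < 1) :
    HasSum (zigzagStep r) ![(1 - r)⁻¹, (1 + r)⁻¹] := by
  rw [Pi.hasSum, Fin.forall_fin_two]
  have hneg := hasSum_geometric_of_abs_lt_one (r := -r) (by rwa [abs_neg])
  rw [sub_neg_eq_add] at hneg
  exact ⟨hasSum_geometric_of_abs_lt_one hr, hneg⟩

end ZigzagStep

theorem xseq_add_two (k : ℕ) :
    xseq (k + 2) = ∑ j ∈ Finset.range k, zigzagStep (1 / 2) j := by
  ext c
  cases k <;> fin_cases c <;> simp [xseq, zigzagStep]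

theorem isInfPathFrom_xseq : IsInfPathFrom ![1, -1] ![1, 1] xseq := by
  have hfirst : xseq 1 - xseq 0 = (-4 / 3 : ℝ) • ![1, 1] := by
    ext c
    fin_cases c <;> norm_num [xseq]
  have hsecond : xseq 2 - xseq 1 = (2 / 3 : ℝ) • ![-1, 1] := by
    ext c
    fin_cases c <;> norm_num [xseq]
  have htail : IsInfPathFrom ![1, -1] ![1, 1] (fun k ↦ xseq (k + 2)) := by
    simpa only [xseq_add_two] using isInfPathFrom_sum_zigzagStep (by norm_num : (1 / 2 : ℝ) ≠ 0)
  refine isInfPathFrom_iff_tail.2 ⟨?_, ?_, isInfPathFrom_iff_tail.2 ⟨?_, ?_, htail⟩⟩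
  · simp [hfirst]
  · simp [hfirst]
  · simp [hsecond]
  · simp [hsecond]

theorem tendsto_xseq : Tendsto xseq atTop (𝓝 (xseq 0)) := by
  have hlim : xseq 0 = ![(1 - 1 / 2)⁻¹, (1 + 1 / 2)⁻¹] := by
    norm_num [xseq]
  rw [← tendsto_add_atTop_iff_nat 2, hlim]
  simp only [xseq_add_two]
  exact (hasSum_zigzagStep (by norm_num [abs_lt])).tendsto_sum_nat

/-- with `a¹ = (1,−1)`, `a² = (1,1)`, the ordered set
`(x⁰, x¹, x², …)` is a path of infinite length, `xⁿ → x⁰`, and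
`X = {x⁰, x¹, …}` is compact. -/
theorem xseq_is_infinite_path_tendsto_and_compact :
    IsInfPath ![(1 : ℝ), -1] ![(1 : ℝ), 1] xseq ∧
    Filter.Tendsto xseq Filter.atTop (nhds (xseq 0)) ∧
    IsCompact (Set.range xseq) :=
  ⟨Or.inl isInfPathFrom_xseq, tendsto_xseq, isCompact_range_of_tendsto_apply tendsto_xseq⟩
end

section
/- Let a¹ = (1, −1), a² = (1, 1) in ℝ², let X = {x⁰, x¹, x², ...} ⊂ ℝ² where x⁰ = (2, 2/3), x¹ = (2/3, −2/3), x² = (0, 0), and x^{3+k} = (Σ_{j=0}^{k} 2^{−j}, Σ_{j=0}^{k} (−1)^j 2^{−j}) for k = 0, 1, 2, .... Let (cₙ)_{n≥1} be a sequence with cₙ > 0, cₙ → 0 and Σ_{n=1}^∞ cₙ = ∞, and let f₀ : X → ℝ be defined by f₀(x^{2n}) = 0 and f₀(x^{2n+1}) = c_{n+1} for n = 0, 1, 2, .... Then f₀ is continuous on X and inf_{g ∈ R_b(X)} ‖f₀ − g‖_{B(X)} = 0. -/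
open Matrix Set Filter Topology

/-!
Both claims hold for every `f` with `f (xᵏ) → f (x⁰)`. Since `xᵏ → x⁰`, the set `X` is the image of
the one-point compactification of `ℕ`, which gives continuity. For the distance, the points form an
infinite path: `x²ᵐ` and `x²ᵐ⁺¹` share their `a¹`-level, `x²ᵐ⁺¹` and `x²ᵐ⁺²` their `a²`-level, and
no level recurs later. Prescribed values along such a path therefore determine the ridge summands
level by level, up to a constant, and the summands are bounded as soon as the values and the partial
sums of their alternating differences are. This holds for the values of `f` along the path cut off
to a constant after finitely many steps, and these cut-offs converge to `f` uniformly.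
-/

section Topology

variable {K X Y α : Type*} [TopologicalSpace X] [T2Space X] [TopologicalSpace Y] {f : X → Y}

theorem continuousOn_range_iff_continuous_comp [TopologicalSpace K] [CompactSpace K] {φ : K → X}
    (hφ : Continuous φ) : ContinuousOn f (Set.range φ) ↔ Continuous (f ∘ φ) := by
  have hquot : IsQuotientMap (Set.rangeFactorization φ) :=
    .of_surjective_continuous Set.rangeFactorization_surjective hφ.rangeFactorization
  rw [continuousOn_iff_continuous_domRestrict, hquot.continuous_iff]
  rfl

theorem continuousOn_insert_range_of_tendsto {u : ℕ → X} {x : X} (hu : Tendsto u atTop (𝓝 x))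
    (hfu : Tendsto (f ∘ u) atTop (𝓝 (f x))) : ContinuousOn f (insert x (Set.range u)) := by
  let φ : C(OnePoint ℕ, X) := OnePoint.continuousMapMkNat u x hu
  have hrange : Set.range φ = insert x (Set.range u) := Option.range_eq φ
  rw [← hrange, continuousOn_range_iff_continuous_comp φ.continuous,
    OnePoint.continuous_iff_from_nat]
  exact hfu

theorem tendsto_atTop_of_even_of_odd {u : ℕ → α} {l : Filter α}
    (heven : Tendsto (fun m => u (2 * m)) atTop l)
    (hodd : Tendsto (fun m => u (2 * m + 1)) atTop l) : Tendsto u atTop l := by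
  intro s hs
  obtain ⟨M, hM⟩ := eventually_atTop.1 ((heven.eventually hs).and (hodd.eventually hs))
  refine mem_atTop_sets.2 ⟨2 * M, fun k hk => ?_⟩
  obtain ⟨m, rfl | rfl⟩ := k.even_or_odd'
  · exact (hM m (by omega)).1
  · exact (hM m (by omega)).2

end Topology

section RidgeApproximation

variable {n : ℕ} {X : Set (Fin n → ℝ)} {f : (Fin n → ℝ) → ℝ}

theorem supDist_nonneg (X : Set (Fin n → ℝ)) (f g : (Fin n → ℝ) → ℝ) : 0 ≤ supDist X f g := by
  apply Real.sSup_nonneg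
  rintro _ ⟨x, _, rfl⟩
  exact abs_nonneg _

theorem supDist_le {g : (Fin n → ℝ) → ℝ} {ε : ℝ} (hε : 0 ≤ ε) (h : ∀ x ∈ X, |f x - g x| ≤ ε) :
    supDist X f g ≤ ε := by
  refine Real.sSup_le ?_ hε
  rintro _ ⟨x, hx, rfl⟩
  exact h x hx

theorem sInf_supDist_image_eq_zero {S : Set ((Fin n → ℝ) → ℝ)}
    (h : ∀ ε > 0, ∃ g ∈ S, ∀ x ∈ X, |f x - g x| ≤ ε) : sInf (supDist X f '' S) = 0 := by
  have hnonneg : ∀ r ∈ supDist X f '' S, 0 ≤ r := by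
    rintro _ ⟨g, _, rfl⟩
    exact supDist_nonneg X f g
  refine le_antisymm (le_of_forall_pos_le_add fun ε hε => ?_) (Real.sInf_nonneg hnonneg)
  obtain ⟨g, hgS, hg⟩ := h ε hε
  calc sInf (supDist X f '' S)
      ≤ supDist X f g := csInf_le ⟨0, hnonneg⟩ ⟨g, hgS, rfl⟩
    _ ≤ 0 + ε := (zero_add ε).symm ▸ supDist_le hε.le hg

variable {a1 a2 : Fin n → ℝ} {p : ℕ → Fin n → ℝ} {s t : ℕ → ℝ}

theorem exists_mem_RbSet_forall_eq (hs : Function.Injective s) (ht : Function.Injective t)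
    (hps : ∀ k, a1 ⬝ᵥ p k = s (k / 2)) (hpt : ∀ k, a2 ⬝ᵥ p k = t ((k + 1) / 2)) {h : ℕ → ℝ}
    (hh : Bornology.IsBounded (Set.range h))
    (hsum : Bornology.IsBounded
      (Set.range fun m => ∑ j ∈ Finset.range m, (h (2 * j + 1) - h (2 * j)))) :
    ∃ g ∈ RbSet a1 a2 (Set.range p), ∀ k, g (p k) = h k := by
  set A : ℕ → ℝ := fun m => ∑ j ∈ Finset.range m, (h (2 * j + 1) - h (2 * j))
  obtain ⟨C, hC⟩ := isBounded_iff_forall_norm_le.1 hh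
  obtain ⟨D, hD⟩ := isBounded_iff_forall_norm_le.1 hsum
  rw [Set.forall_mem_range] at hC hD
  let g1 : ℝ → ℝ := Function.extend s (fun m => h (2 * m) - A m) 0
  let g2 : ℝ → ℝ := Function.extend t A 0
  have hg1 : ∀ k, g1 (a1 ⬝ᵥ p k) = h (2 * (k / 2)) - A (k / 2) := fun k =>
    (congrArg g1 (hps k)).trans (hs.extend_apply _ _ _)
  have hg2 : ∀ k, g2 (a2 ⬝ᵥ p k) = A ((k + 1) / 2) := fun k =>
    (congrArg g2 (hpt k)).trans (ht.extend_apply _ _ _)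
  refine ⟨fun x => g1 (a1 ⬝ᵥ x) + g2 (a2 ⬝ᵥ x), ⟨g1, g2, fun _ _ => rfl, ⟨C + D, ?_⟩, ⟨D, ?_⟩⟩, ?_⟩
  · rintro _ ⟨k, rfl⟩
    simp only [hg1]
    exact (abs_sub _ _).trans (add_le_add (hC _) (hD _))
  · rintro _ ⟨k, rfl⟩
    simp only [hg2]
    exact hD _
  · intro k
    simp only [hg1, hg2]
    obtain ⟨m, rfl | rfl⟩ := k.even_or_odd'
    · rw [show 2 * m / 2 = m by omega, show (2 * m + 1) / 2 = m by omega, sub_add_cancel]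
    · have hA : A (m + 1) = A m + (h (2 * m + 1) - h (2 * m)) := Finset.sum_range_succ _ m
      rw [show (2 * m + 1) / 2 = m by omega, show (2 * m + 1 + 1) / 2 = m + 1 by omega, hA]
      ring

theorem exists_mem_RbSet_forall_abs_sub_le (hs : Function.Injective s) (ht : Function.Injective t)
    (hps : ∀ k, a1 ⬝ᵥ p k = s (k / 2)) (hpt : ∀ k, a2 ⬝ᵥ p k = t ((k + 1) / 2)) {L : ℝ}
    (hf : Tendsto (f ∘ p) atTop (𝓝 L)) {ε : ℝ} (hε : 0 < ε) :
    ∃ g ∈ RbSet a1 a2 (Set.range p), ∀ x ∈ Set.range p, |f x - g x| ≤ ε := by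
  obtain ⟨N, hN⟩ := Metric.tendsto_atTop.1 hf ε hε
  let h : ℕ → ℝ := fun k => if k < N then f (p k) else L
  have h_of_ge : ∀ k, N ≤ k → h k = L := fun k hk => if_neg hk.not_gt
  have h_tendsto : Tendsto h atTop (𝓝 L) := tendsto_atTop_of_eventually_const h_of_ge
  have h_summable : Summable fun j => h (2 * j + 1) - h (2 * j) := by
    refine summable_of_ne_finset_zero (s := Finset.range N) fun j hj => ?_
    have hj : N ≤ j := by simpa using hj
    rw [h_of_ge _ (by omega), h_of_ge _ (by omega), sub_self]
  obtain ⟨g, hg, hgp⟩ := exists_mem_RbSet_forall_eq hs ht hps hpt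
    (Metric.isBounded_range_of_tendsto h h_tendsto)
    (Metric.isBounded_range_of_tendsto _ h_summable.hasSum.tendsto_sum_nat)
  refine ⟨g, hg, ?_⟩
  rintro _ ⟨k, rfl⟩
  rw [hgp]
  by_cases hk : k < N
  · simpa [h, hk] using hε.le
  · rw [h_of_ge k (not_lt.1 hk)]
    exact (hN k (not_lt.1 hk)).le

end RidgeApproximation

theorem xseq_add_two_s3 (k : ℕ) :
    xseq (k + 2) = ![2 - 2 * (1 / 2) ^ k, 2 / 3 - 2 / 3 * (-(1 / 2)) ^ k] := by
  cases k with
  | zero => simp [xseq]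
  | succ k =>
    rw [xseq, geom_sum_eq (by norm_num), geom_sum_eq (by norm_num)]
    refine congrArg₂ (![·, ·]) ?_ ?_ <;> ring

/-- The levels of the path `x⁰, x¹, …`: `xlevel m` is the common value of `a² · x` at `x²ᵐ⁻¹` and
`x²ᵐ` (at `x⁰` alone if `m = 0`), and twice the common value of `a¹ · x` at `x²ᵐ` and `x²ᵐ⁺¹`. Since
`xᵏ → x⁰`, the value at `0` is the limit of the others. -/
noncomputable def xlevel : ℕ → ℝ
  | 0 => 8 / 3
  | m + 1 => 8 / 3 * (1 - (1 / 4) ^ m)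

theorem xlevel_injective : Function.Injective xlevel := by
  have hpow : Function.Injective fun m : ℕ => (1 / 4 : ℝ) ^ m :=
    pow_right_injective₀ (by norm_num) (by norm_num)
  rintro (_ | m) (_ | m') h
  · rfl
  · simp [xlevel] at h
  · simp [xlevel] at h
  · simpa [xlevel, hpow.eq_iff] using h

theorem dotProduct_xseq (k : ℕ) :
    ![1, -1] ⬝ᵥ xseq k = xlevel (k / 2) / 2 ∧ ![1, 1] ⬝ᵥ xseq k = xlevel ((k + 1) / 2) := by
  have hsq : (1 / 2 : ℝ) ^ 2 = 1 / 4 := by norm_num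
  rw [vec2_dotProduct, vec2_dotProduct]
  match k with
  | 0 | 1 => norm_num [xseq, xlevel]
  | k + 2 =>
    obtain ⟨m, rfl | rfl⟩ := k.even_or_odd'
    · rw [xseq_add_two_s3, show (2 * m + 2) / 2 = m + 1 by omega,
        show (2 * m + 2 + 1) / 2 = m + 1 by omega, pow_mul, pow_mul, neg_sq, hsq]
      constructor <;> simp only [xlevel, cons_val_zero, cons_val_one] <;> ring
    · rw [xseq_add_two_s3, show (2 * m + 1 + 2) / 2 = m + 1 by omega,
        show (2 * m + 1 + 2 + 1) / 2 = m + 1 + 1 by omega, pow_succ, pow_succ, pow_mul, pow_mul,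
        neg_sq, hsq]
      constructor <;> simp only [xlevel, cons_val_zero, cons_val_one] <;> ring

theorem f0_continuous_and_inf_dist_to_Rb_eq_zero_general {f : (Fin 2 → ℝ) → ℝ}
    (hf : Tendsto (f ∘ xseq) atTop (𝓝 (f (xseq 0)))) :
    ContinuousOn f (Set.range xseq) ∧
    sInf (supDist (Set.range xseq) f '' RbSet ![1, -1] ![1, 1] (Set.range xseq)) = 0 := by
  constructor
  · simpa only [Set.insert_eq_of_mem (Set.mem_range_self 0)] using
      continuousOn_insert_range_of_tendsto tendsto_xseq hf
  · exact sInf_supDist_image_eq_zero fun ε hε =>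
      exists_mem_RbSet_forall_abs_sub_le
        (fun _ _ h => xlevel_injective (div_left_inj' two_ne_zero |>.1 h)) xlevel_injective
        (fun k => (dotProduct_xseq k).1) (fun k => (dotProduct_xseq k).2) hf hε

/-- for a sequence `cₙ > 0` with `cₙ → 0` and `∑ cₙ = ∞`, the
function `f₀` with `f₀(x^{2n}) = 0`, `f₀(x^{2n+1}) = c_{n+1}` is continuous on
`X = {x⁰, x¹, …}` and `inf_{g ∈ R_b(X)} ‖f₀ − g‖ = 0`. -/
theorem f0_continuous_and_inf_dist_to_Rb_eq_zero
    (c : ℕ → ℝ) (hpos : ∀ m : ℕ, 1 ≤ m → 0 < c m)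
    (hlim : Filter.Tendsto c Filter.atTop (nhds 0))
    (hdiv : ¬ Summable fun m => c (m + 1))
    (f0 : (Fin 2 → ℝ) → ℝ)
    (hf0even : ∀ m : ℕ, f0 (xseq (2 * m)) = 0)
    (hf0odd : ∀ m : ℕ, f0 (xseq (2 * m + 1)) = c (m + 1)) :
    ContinuousOn f0 (Set.range xseq) ∧
    sInf ((supDist (Set.range xseq) f0) ''
        RbSet ![(1 : ℝ), -1] ![(1 : ℝ), 1] (Set.range xseq)) = 0 := by
  have hf0zero : f0 (xseq 0) = 0 := hf0even 0
  refine f0_continuous_and_inf_dist_to_Rb_eq_zero_general (tendsto_atTop_of_even_of_odd ?_ ?_)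
  · simp [hf0even, hf0zero]
  · simpa [hf0odd, hf0zero, Function.comp_def] using hlim.comp (tendsto_add_atTop_nat 1)
end

section
/- Let a¹ = (1, −1), a² = (1, 1) in ℝ², let X = {x⁰, x¹, x², ...} ⊂ ℝ² where x⁰ = (2, 2/3), x¹ = (2/3, −2/3), x² = (0, 0), and x^{3+k} = (Σ_{j=0}^{k} 2^{−j}, Σ_{j=0}^{k} (−1)^j 2^{−j}) for k = 0, 1, 2, .... Let (cₙ)_{n≥1} be a sequence with cₙ > 0, and let f₀ : X → ℝ be defined by f₀(x^{2n}) = 0 and f₀(x^{2n+1}) = c_{n+1} for n = 0, 1, 2, .... If f₀(x) = g₁(a¹·x) + g₂(a²·x) for all x ∈ X, for some g₁, g₂ : ℝ → ℝ, then for every k ≥ 0 one has g₂(a²·x^{2k+1}) − g₂(a²·x⁰) = Σ_{n=0}^{k} c_{n+1}. -/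
open Matrix Set Filter Topology

/-! The points `x⁰, x¹, x², …` alternate between steps along which `a¹ · x` is constant and steps
along which `a² · x` is constant. On a step of the first kind `g₁` cancels, so the increment of `f₀`
is that of `g₂`; on a step of the second kind `g₂` does not change. The increments of `f₀` over the
steps of the first kind therefore telescope to the total increment of `g₂`. -/

theorem g2_increment_along_path_general {X α β M : Type*} [AddCommGroup M]
    {a1 : X → α} {a2 : X → β} {p : ℕ → X} {f : X → M} {g1 : α → M} {g2 : β → M}
    (ha1 : ∀ n, a1 (p (2 * n)) = a1 (p (2 * n + 1)))
    (ha2 : ∀ n, a2 (p (2 * n + 1)) = a2 (p (2 * n + 2)))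
    (hrep : ∀ x ∈ range p, f x = g1 (a1 x) + g2 (a2 x)) (k : ℕ) :
    g2 (a2 (p (2 * k + 1))) - g2 (a2 (p 0)) =
      ∑ m ∈ Finset.range (k + 1), (f (p (2 * m + 1)) - f (p (2 * m))) := by
  have increment (m : ℕ) :
      f (p (2 * m + 1)) - f (p (2 * m)) = g2 (a2 (p (2 * (m + 1)))) - g2 (a2 (p (2 * m))) := by
    rw [hrep _ (mem_range_self _), hrep _ (mem_range_self _), ha1, ha2, add_sub_add_left_eq_sub,
      mul_add_one]
  calc
    g2 (a2 (p (2 * k + 1))) - g2 (a2 (p 0)) = g2 (a2 (p (2 * (k + 1)))) - g2 (a2 (p (2 * 0))) := by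
      rw [ha2, mul_add_one, mul_zero]
    _ = ∑ m ∈ Finset.range (k + 1), (g2 (a2 (p (2 * (m + 1)))) - g2 (a2 (p (2 * m)))) :=
      (Finset.sum_range_sub (fun m ↦ g2 (a2 (p (2 * m)))) (k + 1)).symm
    _ = ∑ m ∈ Finset.range (k + 1), (f (p (2 * m + 1)) - f (p (2 * m))) := by
      simp only [increment]

theorem xseq_add_four (k : ℕ) :
    xseq (k + 4) = xseq (k + 3) + ![(1 / 2) ^ (k + 1), (-(1 / 2)) ^ (k + 1)] := by
  simp only [xseq, Finset.sum_range_succ _ (k + 1), cons_add_cons, empty_add_empty]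

theorem one_neg_one_dotProduct_xseq_two_mul (n : ℕ) :
    ![(1 : ℝ), -1] ⬝ᵥ xseq (2 * n) = ![(1 : ℝ), -1] ⬝ᵥ xseq (2 * n + 1) := by
  match n with
  | 0 => norm_num [xseq]
  | 1 => simp [xseq]
  | m + 2 =>
    have orthogonal_step :
        ![(1 : ℝ), -1] ⬝ᵥ ![(1 / 2) ^ (2 * m + 1 + 1), (-(1 / 2)) ^ (2 * m + 1 + 1)] = 0 := by
      simp [(odd_two_mul_add_one m).add_one.neg_pow]
    change _ ⬝ᵥ xseq (2 * m + 1 + 3) = _ ⬝ᵥ xseq (2 * m + 1 + 4)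
    rw [xseq_add_four (2 * m + 1), dotProduct_add, orthogonal_step, add_zero]

theorem one_one_dotProduct_xseq_two_mul_add_one (n : ℕ) :
    ![(1 : ℝ), 1] ⬝ᵥ xseq (2 * n + 1) = ![(1 : ℝ), 1] ⬝ᵥ xseq (2 * n + 2) := by
  match n with
  | 0 => simp [xseq]
  | m + 1 =>
    have orthogonal_step :
        ![(1 : ℝ), 1] ⬝ᵥ ![(1 / 2) ^ (2 * m + 1), (-(1 / 2)) ^ (2 * m + 1)] = 0 := by
      simp [(odd_two_mul_add_one m).neg_pow]
    change _ ⬝ᵥ xseq (2 * m + 3) = _ ⬝ᵥ xseq (2 * m + 4)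
    rw [xseq_add_four, dotProduct_add, orthogonal_step, add_zero]

/-- if `f₀ = g₁(a¹·x) + g₂(a²·x)` on `X = {x⁰, x¹, …}`, then for
every `k ≥ 0`, `g₂(a²·x^{2k+1}) − g₂(a²·x⁰) = ∑_{n=0}^{k} c_{n+1}`. -/
theorem g2_increment_along_path
    (c : ℕ → ℝ) (hpos : ∀ m : ℕ, 1 ≤ m → 0 < c m)
    (f0 : (Fin 2 → ℝ) → ℝ)
    (hf0even : ∀ m : ℕ, f0 (xseq (2 * m)) = 0)
    (hf0odd : ∀ m : ℕ, f0 (xseq (2 * m + 1)) = c (m + 1))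
    (g1 g2 : ℝ → ℝ)
    (hrep : ∀ x ∈ Set.range xseq,
      f0 x = g1 (![(1 : ℝ), -1] ⬝ᵥ x) + g2 (![(1 : ℝ), 1] ⬝ᵥ x)) :
    ∀ k : ℕ,
      g2 (![(1 : ℝ), 1] ⬝ᵥ xseq (2 * k + 1)) - g2 (![(1 : ℝ), 1] ⬝ᵥ xseq 0) =
        ∑ m ∈ Finset.range (k + 1), c (m + 1) := by
  simpa only [hf0even, hf0odd, sub_zero] using
    g2_increment_along_path_general one_neg_one_dotProduct_xseq_two_mul
      one_one_dotProduct_xseq_two_mul_add_one hrep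
end
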